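/- Let n, k be positive integers with n even and n > 2k + 4. Let V be an F_2-vector space of dimension n, let h : V → F_2, and let W ⊆ V be an M-subspace of h with dim W = n/2 such that every M-subspace of h of dimension at least 2 is contained in W. Let W̃ ⊆ V be a subspace with V = W ⊕ W̃, and let L : V → V be an F_2-linear bijection with L(W̃) = W. For z ∈ F_{2^k} set f^{(z)} = h if Tr_1^k(z) = 0 and f^{(z)} = h ∘ L if Tr_1^k(z) = 1, and define f : V × F_{2^k} × F_{2^k} → F_2 by f(x,y,z) = f^{(z)}(x) + Tr_1^k(yz). Then every M-subspace U of f satisfies dim U < n/2 + k. -/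

import Mathlib

/-- The second-order derivative `D_a D_b f (x) = f x + f (x+a) + f (x+b) + f (x+a+b)`. -/
def D2 {V : Type*} [AddCommGroup V] (f : V → ZMod 2) (a b x : V) : ZMod 2 :=
  f x + f (x + a) + f (x + b) + f (x + a + b)

/-- An `M`-subspace of `f` : a subspace on which all second-order derivatives of `f` vanish. -/
def IsMSubspace {V : Type*} [AddCommGroup V] [Module (ZMod 2) V] (f : V → ZMod 2)
    (U : Submodule (ZMod 2) V) : Prop :=
  ∀ a ∈ U, ∀ b ∈ U, ∀ x, D2 f a b x = 0

/-- The absolute trace map of `F_{2^k}`. -/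
noncomputable def Tr (k : ℕ) (x : GaloisField 2 k) : ZMod 2 :=
  Algebra.trace (ZMod 2) (GaloisField 2 k) x

/-!
Let `U` be an `M`-subspace of `f`. The vectors `a` with `(a, 0, 0) ∈ U` form a subspace `A` of `V`
of codimension at most `2k` in `U`. Differentiating `f` in directions from `A` leaves `y` and `z`
fixed, so `A` is an `M`-subspace of every restriction `f (·, y, z)`, in particular of both `h` and
`h ∘ L`. If `A` had dimension at least `2`, it would lie in `W` and in `L⁻¹(W) = W̃`, which meet
trivially. Hence `dim U ≤ 2k + 1 < n/2 + k`.
-/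

open Module

section LinearAlgebra

theorem rank_submodule_le_of_forall_finrank_le {R M : Type*} [Ring R] [StrongRankCondition R]
    [AddCommGroup M] [Module R M] {U : Submodule R M} {n : ℕ}
    (hU : ∀ T ≤ U, Module.Finite R T → finrank R T ≤ n) : Module.rank R U ≤ n := by
  refine rank_le fun s hs ↦ ?_
  have hspan : finrank R (Submodule.span R (s : Set U)) = s.card :=
    finrank_span_finset_eq_card hs
  rw [← hspan, ← Submodule.finrank_map_subtype_eq]
  exact hU _ (Submodule.map_subtype_le U _) inferInstance

variable {K V E : Type*} [DivisionRing K] [AddCommGroup V] [Module K V] [AddCommGroup E]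
  [Module K E]

theorem finrank_ker_snd_domRestrict (U : Submodule K (V × E)) :
    finrank K ((LinearMap.snd K V E).domRestrict U).ker =
      finrank K (U.comap (LinearMap.inl K V E)) := by
  rw [← Submodule.finrank_map_subtype_eq, LinearMap.domRestrict, LinearMap.ker_comp,
    Submodule.map_comap_subtype, LinearMap.ker_snd, inf_comm, ← Submodule.map_comap_eq]
  exact (Submodule.equivMapOfInjective _ LinearMap.inl_injective _).finrank_eq.symm

theorem finrank_le_finrank_comap_inl_add [FiniteDimensional K E] (U : Submodule K (V × E))
    [FiniteDimensional K U] :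
    finrank K U ≤ finrank K (U.comap (LinearMap.inl K V E)) + finrank K E := by
  rw [← LinearMap.finrank_range_add_finrank_ker ((LinearMap.snd K V E).domRestrict U),
    finrank_ker_snd_domRestrict, add_comm]
  gcongr
  exact Submodule.finrank_le _

end LinearAlgebra

section MSubspaces

variable {V V' E : Type*} [AddCommGroup V] [Module (ZMod 2) V] [AddCommGroup V']
  [Module (ZMod 2) V'] [AddCommGroup E] [Module (ZMod 2) E]

/-- Every `M`-subspace of `f` of dimension greater than `d` is contained in `W`. For infinite
dimensional `M`-subspaces this says nothing directly, since their `finrank` is `0`. -/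
def ConfinesMSubspaces (f : V → ZMod 2) (d : ℕ) (W : Submodule (ZMod 2) V) : Prop :=
  ∀ U : Submodule (ZMod 2) V, IsMSubspace f U → d < finrank (ZMod 2) U → U ≤ W

theorem IsMSubspace.mono {f : V → ZMod 2} {T U : Submodule (ZMod 2) V} (hU : IsMSubspace f U)
    (hTU : T ≤ U) : IsMSubspace f T :=
  fun a ha b hb ↦ hU a (hTU ha) b (hTU hb)

theorem IsMSubspace.map_linearEquiv {h : V' → ZMod 2} {L : V ≃ₗ[ZMod 2] V'}
    {U : Submodule (ZMod 2) V} (hU : IsMSubspace (h ∘ L) U) :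
    IsMSubspace h (U.map (L : V →ₗ[ZMod 2] V')) := by
  rintro _ ⟨a, ha, rfl⟩ _ ⟨b, hb, rfl⟩ x
  simpa [D2] using hU a ha b hb (L.symm x)

theorem IsMSubspace.comap_inl {f : V × E → ZMod 2} {U : Submodule (ZMod 2) (V × E)}
    (hU : IsMSubspace f U) (e : E) :
    IsMSubspace (fun x ↦ f (x, e)) (U.comap (LinearMap.inl (ZMod 2) V E)) := by
  intro a ha b hb x
  simpa [D2] using hU (a, 0) ha (b, 0) hb (x, e)

theorem ConfinesMSubspaces.comp_linearEquiv {h : V' → ZMod 2} {d : ℕ}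
    {W : Submodule (ZMod 2) V'} (hW : ConfinesMSubspaces h d W) (L : V ≃ₗ[ZMod 2] V') :
    ConfinesMSubspaces (h ∘ L) d (W.comap (L : V →ₗ[ZMod 2] V')) := by
  intro U hU hd
  rw [← Submodule.map_le_iff_le_comap]
  exact hW _ hU.map_linearEquiv (by rwa [LinearEquiv.finrank_map_eq])

theorem ConfinesMSubspaces.finrank_le_of_disjoint {h₀ h₁ : V → ZMod 2} {d : ℕ}
    {W₀ W₁ U : Submodule (ZMod 2) V} (hW₀ : ConfinesMSubspaces h₀ d W₀)
    (hW₁ : ConfinesMSubspaces h₁ d W₁) (hdisj : Disjoint W₀ W₁) (hU₀ : IsMSubspace h₀ U)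
    (hU₁ : IsMSubspace h₁ U) : finrank (ZMod 2) U ≤ d := by
  by_contra! hd
  have hbot : U = ⊥ := le_bot_iff.1 (hdisj (hW₀ U hU₀ hd) (hW₁ U hU₁ hd))
  rw [hbot, finrank_bot] at hd
  exact Nat.not_lt_zero d hd

theorem IsMSubspace.rank_le_of_disjoint [FiniteDimensional (ZMod 2) E] {f : V × E → ZMod 2}
    {d : ℕ} {e₀ e₁ : E} {W₀ W₁ : Submodule (ZMod 2) V}
    (hW₀ : ConfinesMSubspaces (fun x ↦ f (x, e₀)) d W₀)
    (hW₁ : ConfinesMSubspaces (fun x ↦ f (x, e₁)) d W₁) (hdisj : Disjoint W₀ W₁)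
    {U : Submodule (ZMod 2) (V × E)} (hU : IsMSubspace f U) :
    Module.rank (ZMod 2) U ≤ (d + finrank (ZMod 2) E : ℕ) := by
  refine rank_submodule_le_of_forall_finrank_le fun T hTU _ ↦ ?_
  have hT : IsMSubspace f T := hU.mono hTU
  calc finrank (ZMod 2) T
      ≤ finrank (ZMod 2) (T.comap (LinearMap.inl (ZMod 2) V E)) + finrank (ZMod 2) E :=
        finrank_le_finrank_comap_inl_add T
    _ ≤ d + finrank (ZMod 2) E := by
        gcongr
        exact hW₀.finrank_le_of_disjoint hW₁ hdisj (hT.comap_inl e₀) (hT.comap_inl e₁)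

end MSubspaces

theorem Tr_zero (k : ℕ) : Tr k 0 = 0 :=
  map_zero (Algebra.trace (ZMod 2) (GaloisField 2 k))

theorem exists_Tr_ne_zero (k : ℕ) : ∃ z : GaloisField 2 k, Tr k z ≠ 0 := by
  obtain ⟨z, hz⟩ := Algebra.trace_surjective (ZMod 2) (GaloisField 2 k) 1
  exact ⟨z, by simp [Tr, hz]⟩

theorem GMM_outside_MM_general {V E : Type*} [AddCommGroup V] [Module (ZMod 2) V]
    [AddCommGroup E] [Module (ZMod 2) E] [FiniteDimensional (ZMod 2) E] {h : V → ZMod 2} {d : ℕ}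
    {W W' : Submodule (ZMod 2) V} (hW : ConfinesMSubspaces h d W) (hdisj : Disjoint W W')
    {L : V ≃ₗ[ZMod 2] V} (hL : W'.map (L : V →ₗ[ZMod 2] V) = W) {f : V × E → ZMod 2} {e₀ e₁ : E}
    (hf₀ : ∀ x, f (x, e₀) = h x) (hf₁ : ∀ x, f (x, e₁) = h (L x))
    {U : Submodule (ZMod 2) (V × E)} (hU : IsMSubspace f U) :
    Module.rank (ZMod 2) U ≤ (d + finrank (ZMod 2) E : ℕ) := by
  have hW' : ConfinesMSubspaces (h ∘ L) d W' := by
    simpa [← hL, Submodule.comap_map_eq_of_injective L.injective] using hW.comp_linearEquiv L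
  rw [← funext hf₀] at hW
  rw [← show (fun x ↦ f (x, e₁)) = h ∘ L from funext hf₁] at hW'
  exact hU.rank_le_of_disjoint hW hW' hdisj

/-- Proposition 3.4: starting from a function `h` whose nontrivial `M`-subspaces are all
contained in a unique `M`-subspace `W` of dimension `n/2`, and mixing `h` with `h ∘ L`
(where `L` maps a complement of `W` onto `W`) according to `Tr(z)`, the resulting
generalized Maiorana–McFarland function has no `M`-subspace of dimension `n/2 + k`,
hence is not in the completed Maiorana–McFarland class. -/
theorem GMM_outside_MM
    (n k : ℕ) (hn : 0 < n) (hk : 0 < k) (hneven : Even n) (hnk : n > 2 * k + 4)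
    (V : Type*) [AddCommGroup V] [Module (ZMod 2) V] [FiniteDimensional (ZMod 2) V]
    (hdim : Module.finrank (ZMod 2) V = n)
    (h : V → ZMod 2)
    (W : Submodule (ZMod 2) V) (hW : IsMSubspace h W)
    (hWdim : Module.finrank (ZMod 2) W = n / 2)
    (hWmax : ∀ U : Submodule (ZMod 2) V,
      IsMSubspace h U → 2 ≤ Module.finrank (ZMod 2) U → U ≤ W)
    (W' : Submodule (ZMod 2) V) (hcompl : IsCompl W W')
    (L : V ≃ₗ[ZMod 2] V) (hL : W'.map (L : V →ₗ[ZMod 2] V) = W)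
    (f : V × GaloisField 2 k × GaloisField 2 k → ZMod 2)
    (hf : ∀ (x : V) (y z : GaloisField 2 k),
      f (x, y, z) = (if Tr k z = 0 then h x else h (L x)) + Tr k (y * z)) :
    ∀ U : Submodule (ZMod 2) (V × GaloisField 2 k × GaloisField 2 k),
      IsMSubspace f U → Module.finrank (ZMod 2) U < n / 2 + k := by
  intro U hU
  obtain ⟨z, hz⟩ := exists_Tr_ne_zero k
  have hUdim : finrank (ZMod 2) U ≤ 1 + finrank (ZMod 2) (GaloisField 2 k × GaloisField 2 k) :=
    finrank_le_of_rank_le <| GMM_outside_MM_general (e₀ := (0, 0)) (e₁ := (0, z)) hWmax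
      hcompl.disjoint hL (by simp [hf, Tr_zero]) (by simp [hf, hz, Tr_zero]) hU
  rw [finrank_prod, GaloisField.finrank 2 hk.ne'] at hUdim
  omega
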